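/- Every bilateral symmetric interaction (BSI) game is an exact potential game. Precisely: let S be a finite, linearly ordered set of players, for each i ∈ S let A_i be a nonempty strategy set, and suppose there are functions w_{ij} : A_i × A_j → ℝ for all pairs i ≠ j satisfying the symmetry condition w_{ij}(x, y) = w_{ji}(y, x) for all x ∈ A_i, y ∈ A_j, such that each player's utility has the form u_i(a) = Σ_{j ∈ S, j ≠ i} w_{ij}(a_i, a_j) for every strategy profile a ∈ Π_{i∈S} A_i. Then the function φ(a) = Σ_{i < j} w_{ij}(a_i, a_j) (sum over all ordered pairs i < j in S) is an exact potential for the game; that is, for every player i, every profile a, and every alternative strategy a'_i ∈ A_i, u_i(a'_i, a_{-i}) − u_i(a) = φ(a'_i, a_{-i}) − φ(a). -/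

import Mathlib

/-!
For each player `i`, the sum over pairs splits into the pairs containing `i` and the pairs of
opponents of `i`. By symmetry the first part is the utility of `i`; the second part does not
involve the strategy of `i`, so it cancels when `i` deviates unilaterally.
-/

section ExactPotential

variable {ι : Type*} [DecidableEq ι] {A : ι → Type*} {M : Type*} [AddCommGroup M]

/-- `φ` is an exact potential for the game with strategy sets `A` and utilities `u`: every
unilateral deviation changes the utility of the deviating player and `φ` by the same amount.
The deviation `(a'_i, a_{-i})` is encoded as `Function.update a i x`, and payoffs may lie in any
additive commutative group. -/
def IsExactPotential (u : ι → (∀ k, A k) → M) (φ : (∀ k, A k) → M) : Prop :=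
  ∀ (i : ι) (a : ∀ k, A k) (x : A i),
    u i (Function.update a i x) - u i a = φ (Function.update a i x) - φ a

theorem isExactPotential_of_eq_add {u r : ι → (∀ k, A k) → M} {φ : (∀ k, A k) → M}
    (hφ : ∀ i a, φ a = u i a + r i a)
    (hr : ∀ (i : ι) (a : ∀ k, A k) (x : A i), r i (Function.update a i x) = r i a) :
    IsExactPotential u φ := by
  intro i a x
  rw [hφ i, hφ i, hr, add_sub_add_right_eq_sub]

end ExactPotential

theorem sum_product_self_insert_filter_lt {ι M : Type*} [LinearOrder ι] [AddCommMonoid M]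
    {s : Finset ι} {i : ι} (hi : i ∉ s) {f : ι → ι → M} (hf : ∀ j ∈ s, f i j = f j i) :
    ∑ p ∈ insert i s ×ˢ insert i s with p.1 < p.2, f p.1 p.2 =
      ∑ j ∈ s, f i j + ∑ p ∈ s ×ˢ s with p.1 < p.2, f p.1 p.2 := by
  have pairs_containing_i : ∀ j ∈ s,
      (if i < j then f i j else 0) + (if j < i then f j i else 0) = f i j := by
    intro j hj
    obtain hij | hji := lt_or_gt_of_ne (ne_of_mem_of_not_mem hj hi).symm
    · simp [hij, hij.not_gt]
    · simp [hji, hji.not_gt, hf j hj]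
  simp only [Finset.sum_filter, Finset.sum_product, Finset.sum_insert hi, lt_irrefl, if_false,
    zero_add, Finset.sum_add_distrib]
  rw [← add_assoc, ← Finset.sum_add_distrib, Finset.sum_congr rfl pairs_containing_i]

theorem bsi_game_is_exact_potential_game_general
    {ι : Type*} [Fintype ι] [LinearOrder ι] {A : ι → Type*} {M : Type*} [AddCommGroup M]
    (w : ∀ i j : ι, A i → A j → M)
    (hsym : ∀ i j : ι, i ≠ j → ∀ (x : A i) (y : A j), w i j x y = w j i y x)
    (u : ι → (∀ k, A k) → M)
    (hu : ∀ (i : ι) (a : ∀ k, A k), u i a = ∑ j ∈ Finset.univ.erase i, w i j (a i) (a j)) :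
    IsExactPotential u fun a => ∑ p : ι × ι with p.1 < p.2, w p.1 p.2 (a p.1) (a p.2) := by
  let opponents (i : ι) : Finset ι := Finset.univ.erase i
  refine isExactPotential_of_eq_add
    (r := fun i a => ∑ p ∈ opponents i ×ˢ opponents i with p.1 < p.2, w p.1 p.2 (a p.1) (a p.2))
    (fun i a => ?_) (fun i a x => Finset.sum_congr rfl fun p hp => ?_)
  · have split := sum_product_self_insert_filter_lt (Finset.notMem_erase i Finset.univ)
      (f := fun j k => w j k (a j) (a k))
      fun j hj => hsym i j (Finset.ne_of_mem_erase hj).symm (a i) (a j)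
    rwa [Finset.insert_erase (Finset.mem_univ i), Finset.univ_product_univ, ← hu] at split
  · obtain ⟨h₁, h₂⟩ := Finset.mem_product.mp (Finset.mem_filter.mp hp).1
    rw [Function.update_of_ne (Finset.ne_of_mem_erase h₁),
      Function.update_of_ne (Finset.ne_of_mem_erase h₂)]

/-- Every bilateral symmetric interaction (BSI) game is an exact potential game:
with players from a finite linearly ordered set, pairwise interaction functions
`w i j : A i → A j → ℝ` satisfying the symmetry `w i j x y = w j i y x` for `i ≠ j`,
and utilities `u i a = ∑_{j ≠ i} w i j (a i) (a j)`, the function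
`φ a = ∑_{i < j} w i j (a i) (a j)` is an exact potential. -/
theorem bsi_game_is_exact_potential_game
    {ι : Type*} [Fintype ι] [LinearOrder ι]
    {A : ι → Type*} [∀ i, Nonempty (A i)]
    (w : ∀ i j : ι, A i → A j → ℝ)
    (hsym : ∀ i j : ι, i ≠ j → ∀ (x : A i) (y : A j), w i j x y = w j i y x)
    (u : ∀ _ : ι, (∀ k, A k) → ℝ)
    (hu : ∀ (i : ι) (a : ∀ k, A k),
      u i a = ∑ j ∈ Finset.univ.erase i, w i j (a i) (a j)) :
    ∀ (i : ι) (a : ∀ k, A k) (a' : A i),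
      u i (Function.update a i a') - u i a =
        (∑ p ∈ Finset.univ.filter (fun p : ι × ι => p.1 < p.2),
          w p.1 p.2 (Function.update a i a' p.1) (Function.update a i a' p.2)) -
        (∑ p ∈ Finset.univ.filter (fun p : ι × ι => p.1 < p.2),
          w p.1 p.2 (a p.1) (a p.2)) :=
  bsi_game_is_exact_potential_game_general w hsym u hu
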